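/- arXiv:2102.00493 — 4 statements merged into one kernel-verified Lean document; each statement's English description precedes it below -/
import Mathlib

section
/- For every integer r ≥ 2, almost every real number α ∈ [0,1) (with respect to Lebesgue measure) is normal in base r, i.e., the set of α ∈ [0,1) that are not normal in base r is a Lebesgue null set. -/
open MeasureTheory Filter Finset

/-- The `j`-th digit (after the radix point) of `α` in base `r`: `⌊r^j * α⌋ mod r`. -/
noncomputable def digit (r : ℕ) (α : ℝ) (j : ℕ) : ℤ := ⌊(r : ℝ) ^ j * α⌋ % r

/-- `digitCount r b n α` counts the indices `j` with `1 ≤ j ≤ n` and `digit r α j = b`. -/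
noncomputable def digitCount (r b n : ℕ) (α : ℝ) : ℕ :=
  ((Finset.Icc 1 n).filter (fun j => digit r α j = (b : ℤ))).card

/-- `α` is simply normal in base `r`. -/
def SimplyNormal (r : ℕ) (α : ℝ) : Prop :=
  ∀ b < r, Tendsto (fun n : ℕ => (digitCount r b n α : ℝ) / n) atTop (nhds (1 / r))

/-- `α` is normal in base `r`: `r^m * α` is simply normal in base `r^n`
for all `n ≥ 1` and all `m ≥ 0`. -/
def NormalBase (r : ℕ) (α : ℝ) : Prop :=
  ∀ n : ℕ, 1 ≤ n → ∀ m : ℕ, SimplyNormal (r ^ n) ((r : ℝ) ^ m * α)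

/-!
On `[0, 1)` the pair (leading base-`N` digit, shift `x ↦ N x mod 1`) has law uniform × Lebesgue:
the part of `[0, 1)` with leading digit `b` is an interval of length `1 / N`, which the shift maps
affinely onto `[0, 1)`. Hence the shift preserves Lebesgue measure and is independent of the leading
digit, so the successive digits, being the leading digits along the orbit of the shift, are pairwise
independent and uniform. Etemadi's strong law of large numbers makes almost every point of `[0, 1)`
simply normal in base `N`. Since digits depend only on the fractional part, this extends to almost
every real, and a nonzero dilation preserves null sets, which handles every `r ^ m * α`; the
conditions defining normality are countably many.
-/

open ProbabilityTheory Topology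

section PairwiseIndependentOrbit

variable {Ω E : Type*} [MeasurableSpace Ω] {μ : Measure Ω} {T : Ω → Ω} {X : Ω → E}

lemma indepFun_comp_measurePreserving {Ω' F : Type*} [MeasurableSpace Ω'] {ν : Measure Ω'}
    [MeasurableSpace E] [MeasurableSpace F] {S : Ω' → Ω} {Y : Ω → F}
    (hS : MeasurePreserving S ν μ) (hX : Measurable X) (hY : Measurable Y) (h : X ⟂ᵢ[μ] Y) :
    (X ∘ S) ⟂ᵢ[ν] (Y ∘ S) := by
  rw [indepFun_iff_measure_inter_preimage_eq_mul] at h ⊢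
  intro s t hs ht
  rw [Set.preimage_comp, Set.preimage_comp, ← Set.preimage_inter,
    hS.measure_preimage ((hX hs).inter (hY ht)).nullMeasurableSet,
    hS.measure_preimage (hX hs).nullMeasurableSet, hS.measure_preimage (hY ht).nullMeasurableSet,
    h s t hs ht]

lemma indepFun_comp_iterate [MeasurableSpace E] (hT : MeasurePreserving T μ μ) (hX : Measurable X)
    (h : X ⟂ᵢ[μ] T) {i j : ℕ} (hij : i ≠ j) : (X ∘ T^[i]) ⟂ᵢ[μ] (X ∘ T^[j]) := by
  wlog hlt : i < j generalizing i j
  · exact (this hij.symm (by omega)).symm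
  obtain ⟨k, rfl⟩ := Nat.exists_eq_add_of_lt hlt
  have hXk : Measurable (X ∘ T^[k]) := hX.comp (hT.measurable.iterate k)
  have h_split : X ∘ T^[i + k + 1] = (X ∘ T^[k + 1]) ∘ T^[i] := by
    rw [Function.comp_assoc, ← Function.iterate_add]
    congr 2
    omega
  rw [h_split]
  exact indepFun_comp_measurePreserving (hT.iterate i) hX (hXk.comp hT.measurable)
    (h.comp measurable_id hXk)

lemma identDistrib_comp_iterate [MeasurableSpace E] (hT : MeasurePreserving T μ μ)
    (hX : Measurable X) (i : ℕ) : IdentDistrib (X ∘ T^[i]) X μ μ where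
  aemeasurable_fst := (hX.comp (hT.iterate i).measurable).aemeasurable
  aemeasurable_snd := hX.aemeasurable
  map_eq := by rw [← Measure.map_map hX (hT.iterate i).measurable, (hT.iterate i).map_eq]

theorem ae_tendsto_birkhoffAverage_of_indepFun [NormedAddCommGroup E] [NormedSpace ℝ E]
    [CompleteSpace E] [MeasurableSpace E] [BorelSpace E] (hT : MeasurePreserving T μ μ)
    (hX : Measurable X) (hint : Integrable X μ) (h : X ⟂ᵢ[μ] T) :
    ∀ᵐ ω ∂μ, Tendsto (birkhoffAverage ℝ T X · ω) atTop (𝓝 (∫ ω, X ω ∂μ)) :=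
  strong_law_ae (fun i ↦ X ∘ T^[i]) hint (fun _ _ hij ↦ indepFun_comp_iterate hT hX h hij)
    (identDistrib_comp_iterate hT hX)

end PairwiseIndependentOrbit

section FractionalPart

/-- Lebesgue measure on `[0, 1)`, as a probability measure on all of `ℝ`; the digits are random
variables with respect to it. -/
noncomputable abbrev unitVolume : Measure ℝ := volume.restrict (Set.Ico 0 1)

instance : IsProbabilityMeasure unitVolume := ⟨by simp⟩

lemma volume_floor_eq_inter_fract_preimage (b : ℤ) (A : Set ℝ) :
    volume (Int.floor ⁻¹' {b} ∩ Int.fract ⁻¹' A) = unitVolume A := by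
  have h_floor (y : ℝ) : ⌊y⌋ = b ↔ y + -b ∈ Set.Ico (0 : ℝ) 1 := by
    rw [Int.floor_eq_iff, Set.mem_Ico]
    constructor <;> rintro ⟨_, _⟩ <;> constructor <;> linarith
  have h_translate :
      Int.floor ⁻¹' {b} ∩ Int.fract ⁻¹' A = (· + (-b : ℝ)) ⁻¹' (A ∩ Set.Ico 0 1) := by
    ext y
    simp only [Set.mem_inter_iff, Set.mem_preimage, Set.mem_singleton_iff, ← h_floor, and_comm]
    refine and_congr_right fun hy ↦ ?_
    rw [Int.fract, hy, sub_eq_add_neg]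
  rw [h_translate, measure_preimage_add_right, Measure.restrict_apply' measurableSet_Ico]

lemma quasiMeasurePreserving_fract :
    Measure.QuasiMeasurePreserving (Int.fract : ℝ → ℝ) volume unitVolume := by
  refine ⟨measurable_fract, Measure.AbsolutelyContinuous.mk fun A hA hA0 ↦ ?_⟩
  rw [Measure.map_apply measurable_fract hA, ← Measure.restrict_apply_univ,
    ← Set.preimage_univ (f := (Int.floor : ℝ → ℤ)),
    measure_preimage_eq_zero_iff_of_countable Set.countable_univ]
  intro b _
  rw [Measure.restrict_apply (Int.measurable_floor (measurableSet_singleton b)),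
    volume_floor_eq_inter_fract_preimage, hA0]

end FractionalPart

section BaseExpansion

/-- The map `x ↦ N * x mod 1`, which deletes the leading base-`N` digit of `x ∈ [0, 1)`. -/
noncomputable def digitShift (N : ℕ) (x : ℝ) : ℝ := Int.fract (N * x)

/-- The leading base-`N` digit of `x ∈ [0, 1)`. It is not reduced modulo `N`, so that it is an
element of `{0, …, N - 1}` only for such `x`. -/
noncomputable def leadingDigit (N : ℕ) (x : ℝ) : ℤ := ⌊N * x⌋

variable (N : ℕ)

lemma measurable_digitShift : Measurable (digitShift N) := by
  unfold digitShift; fun_prop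

lemma measurable_leadingDigit : Measurable (leadingDigit N) := by
  unfold leadingDigit; fun_prop

lemma iterate_digitShift_fract (α : ℝ) (j : ℕ) :
    (digitShift N)^[j] (Int.fract α) = Int.fract (N ^ j * α) := by
  induction j with
  | zero => simp
  | succ j ih =>
    rw [Function.iterate_succ_apply', ih, digitShift, Int.fract_eq_fract]
    refine ⟨-(N * ⌊N ^ j * α⌋), ?_⟩
    rw [Int.fract]
    push_cast
    ring

lemma uniformOn_Ico_natCast_singleton {b : ℤ} (hb : b ∈ Set.Ico (0 : ℤ) N) :
    uniformOn (Set.Ico (0 : ℤ) N) {b} = (N : ENNReal)⁻¹ := by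
  rw [← Finset.coe_Ico, ← Finset.coe_singleton, uniformOn_apply_finset,
    Finset.inter_singleton_of_mem (by simpa using hb)]
  simp

variable [NeZero N]

lemma leadingDigit_mem_Ico_iff {x : ℝ} :
    leadingDigit N x ∈ Set.Ico (0 : ℤ) N ↔ x ∈ Set.Ico (0 : ℝ) 1 := by
  have hN : (0 : ℝ) < N := Nat.cast_pos.2 (NeZero.pos N)
  rw [leadingDigit, Set.mem_Ico, Set.mem_Ico, Int.floor_nonneg, Int.floor_lt, Int.cast_natCast,
    mul_nonneg_iff_of_pos_left hN, mul_lt_iff_lt_one_right hN]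

lemma leadingDigit_fract (y : ℝ) : leadingDigit N (Int.fract y) = ⌊N * y⌋ % N := by
  have h_split : (N : ℝ) * y = N * Int.fract y + (N * ⌊y⌋ : ℤ) := by
    rw [Int.fract]
    push_cast
    ring
  have h_digit : leadingDigit N (Int.fract y) ∈ Set.Ico (0 : ℤ) N :=
    (leadingDigit_mem_Ico_iff N).2 ⟨Int.fract_nonneg y, Int.fract_lt_one y⟩
  rw [h_split, Int.floor_add_intCast, Int.add_mul_emod_self_left]
  exact (Int.emod_eq_of_lt h_digit.1 h_digit.2).symm

lemma digit_succ (α : ℝ) (j : ℕ) :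
    digit N α (j + 1) = leadingDigit N ((digitShift N)^[j] (Int.fract α)) := by
  rw [iterate_digitShift_fract, leadingDigit_fract, digit, pow_succ', mul_assoc]

lemma digitCount_eq_birkhoffSum (b n : ℕ) (α : ℝ) :
    (digitCount N b n α : ℝ) =
      birkhoffSum (digitShift N) ((leadingDigit N ⁻¹' {(b : ℤ)}).indicator 1) n (Int.fract α) := by
  classical
  rw [digitCount, card_filter, ← Finset.Ico_add_one_right_eq_Icc, sum_Ico_eq_sum_range,
    Nat.cast_sum, birkhoffSum, Nat.add_sub_cancel]
  refine Finset.sum_congr rfl fun j _ ↦ ?_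
  rw [Set.indicator_apply, Set.mem_preimage, Set.mem_singleton_iff, ← digit_succ, add_comm 1 j]
  simp

lemma unitVolume_leadingDigit_inter_digitShift (b : ℤ) {A : Set ℝ} (hA : MeasurableSet A) :
    unitVolume (leadingDigit N ⁻¹' {b} ∩ digitShift N ⁻¹' A) =
      uniformOn (Set.Ico (0 : ℤ) N) {b} * unitVolume A := by
  have h_meas : MeasurableSet (leadingDigit N ⁻¹' {b} ∩ digitShift N ⁻¹' A) :=
    (measurable_leadingDigit N (measurableSet_singleton b)).inter (measurable_digitShift N hA)
  rw [Measure.restrict_apply h_meas]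
  by_cases hb : b ∈ Set.Ico (0 : ℤ) N
  · have h_cell : leadingDigit N ⁻¹' {b} ∩ digitShift N ⁻¹' A ∩ Set.Ico 0 1 =
        ((N : ℝ) * ·) ⁻¹' (Int.floor ⁻¹' {b} ∩ Int.fract ⁻¹' A) :=
      Set.inter_eq_left.2 fun x hx ↦ (leadingDigit_mem_Ico_iff N).1 (hx.1 ▸ hb)
    rw [h_cell, Real.volume_preimage_mul_left (NeZero.ne _), volume_floor_eq_inter_fract_preimage,
      uniformOn_Ico_natCast_singleton N hb]
    simp [ENNReal.ofReal_inv_of_pos (Nat.cast_pos.2 (NeZero.pos N))]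
  · have h_cell : leadingDigit N ⁻¹' {b} ∩ digitShift N ⁻¹' A ∩ Set.Ico 0 1 = ∅ :=
      Set.eq_empty_of_forall_notMem fun x hx ↦ hb (hx.1.1 ▸ (leadingDigit_mem_Ico_iff N).2 hx.2)
    rw [h_cell, (uniformOn_eq_zero_iff (Set.finite_Ico _ _)).2 (Set.inter_singleton_eq_empty.2 hb)]
    simp

instance : IsProbabilityMeasure (uniformOn (Set.Ico (0 : ℤ) N)) :=
  isProbabilityMeasure_uniformOn (Set.finite_Ico _ _)
    (Set.nonempty_Ico.2 (Nat.cast_pos.2 (NeZero.pos N)))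

theorem measurePreserving_leadingDigit_prodMk_digitShift :
    MeasurePreserving (fun x ↦ (leadingDigit N x, digitShift N x)) unitVolume
      ((uniformOn (Set.Ico (0 : ℤ) N)).prod unitVolume) := by
  have hd := measurable_leadingDigit N
  refine ⟨hd.prodMk (measurable_digitShift N), (Measure.prod_eq fun s A hs hA ↦ ?_).symm⟩
  have h_slice : (unitVolume.restrict (digitShift N ⁻¹' A)).map (leadingDigit N) =
      unitVolume A • uniformOn (Set.Ico (0 : ℤ) N) := by
    refine Measure.ext_of_singleton fun b ↦ ?_
    rw [Measure.map_apply hd (measurableSet_singleton b),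
      Measure.restrict_apply (hd (measurableSet_singleton b)),
      unitVolume_leadingDigit_inter_digitShift N b hA, Measure.smul_apply, smul_eq_mul, mul_comm]
  rw [Measure.map_apply (hd.prodMk (measurable_digitShift N)) (hs.prod hA), Set.mk_preimage_prod,
    ← Measure.restrict_apply (hd hs), ← Measure.map_apply hd hs, h_slice, Measure.smul_apply,
    smul_eq_mul, mul_comm]

lemma measurePreserving_leadingDigit :
    MeasurePreserving (leadingDigit N) unitVolume (uniformOn (Set.Ico (0 : ℤ) N)) :=
  measurePreserving_fst.comp (measurePreserving_leadingDigit_prodMk_digitShift N)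

lemma measurePreserving_digitShift : MeasurePreserving (digitShift N) unitVolume unitVolume :=
  measurePreserving_snd.comp (measurePreserving_leadingDigit_prodMk_digitShift N)

lemma indepFun_leadingDigit_digitShift : leadingDigit N ⟂ᵢ[unitVolume] digitShift N := by
  rw [indepFun_iff_map_prod_eq_prod_map_map (measurable_leadingDigit N).aemeasurable
      (measurable_digitShift N).aemeasurable,
    (measurePreserving_leadingDigit N).map_eq, (measurePreserving_digitShift N).map_eq,
    (measurePreserving_leadingDigit_prodMk_digitShift N).map_eq]

end BaseExpansion

section Normality

lemma ae_tendsto_digitCount_div (N : ℕ) {b : ℕ} (hb : b < N) :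
    ∀ᵐ α : ℝ, Tendsto (fun n : ℕ ↦ (digitCount N b n α : ℝ) / n) atTop (𝓝 (1 / N)) := by
  have : NeZero N := ⟨by omega⟩
  let X : ℝ → ℝ := (leadingDigit N ⁻¹' {(b : ℤ)}).indicator 1
  have h_cell : MeasurableSet (leadingDigit N ⁻¹' {(b : ℤ)}) :=
    measurable_leadingDigit N (measurableSet_singleton _)
  have h_indep : X ⟂ᵢ[unitVolume] digitShift N :=
    (indepFun_leadingDigit_digitShift N).comp (φ := ({(b : ℤ)} : Set ℤ).indicator 1)
      (measurable_of_countable _) measurable_id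
  have h_mean : ∫ x, X x ∂unitVolume = 1 / N := by
    rw [integral_indicator_one h_cell, measureReal_def,
      (measurePreserving_leadingDigit N).measure_preimage
        (measurableSet_singleton _).nullMeasurableSet,
      uniformOn_Ico_natCast_singleton N ⟨by positivity, by exact_mod_cast hb⟩]
    simp
  have h_birkhoff := ae_tendsto_birkhoffAverage_of_indepFun (measurePreserving_digitShift N)
    (measurable_one.indicator h_cell) ((integrable_const 1).indicator h_cell) h_indep
  filter_upwards [quasiMeasurePreserving_fract.ae h_birkhoff] with α hα
  rw [h_mean] at hα
  refine hα.congr fun n ↦ ?_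
  rw [birkhoffAverage, smul_eq_mul, ← digitCount_eq_birkhoffSum, inv_mul_eq_div]

theorem ae_simplyNormal (N : ℕ) : ∀ᵐ α : ℝ, SimplyNormal N α := by
  simp only [SimplyNormal, ae_all_iff]
  exact fun b hb ↦ ae_tendsto_digitCount_div N hb

theorem almost_all_normal_general : ∀ᵐ α : ℝ, ∀ r : ℕ, 0 < r → NormalBase r α := by
  simp only [NormalBase, ae_all_iff]
  intro r hr n _ m
  have hm : (r : ℝ) ^ m ≠ 0 := by positivity
  exact (Measure.quasiMeasurePreserving_smul volume hm).ae (ae_simplyNormal (r ^ n))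

end Normality

/-- Almost every number in `Set.Ico 0 1` is normal in base `r`. -/
theorem almost_all_normal (r : ℕ) (hr : 2 ≤ r) :
    volume {α : ℝ | α ∈ Set.Ico (0 : ℝ) 1 ∧ ¬ NormalBase r α} = 0 := by
  have h_normal : ∀ᵐ α : ℝ, NormalBase r α :=
    almost_all_normal_general.mono fun _ h ↦ h r (by omega)
  exact measure_mono_null (fun _ hα ↦ hα.2) (ae_iff.1 h_normal)
end

section
/- Let r ≥ 2 be an integer and α a real number. If r^m·α is simply normal in base r^n for all integers n ≥ 1 and all integers m with 0 ≤ m < n, then α is normal in base r. -/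
open MeasureTheory Filter Finset

/-!
Multiplying `α` by a power of the base only drops an initial segment of its digits, and dropping
finitely many terms of a sequence does not affect frequencies. So only the residue of `m` modulo `n`
matters: `r ^ (n * q)` is a power of the base `r ^ n`.
-/

theorem tendsto_count_add_div {p : ℕ → Prop} [DecidablePred p] {d : ℝ}
    (h : Tendsto (fun n : ℕ => (Nat.count p n : ℝ) / n) atTop (nhds d)) (k : ℕ) :
    Tendsto (fun n : ℕ => (Nat.count (fun j => p (k + j)) n : ℝ) / n) atTop (nhds d) := by
  have h_tail : Tendsto (fun n : ℕ => (Nat.count p (n + k) : ℝ) / (n + k : ℕ)) atTop (nhds d) :=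
    h.comp (tendsto_add_atTop_nat k)
  have h_ratio : Tendsto (fun n : ℕ => 1 + (k : ℝ) / n) atTop (nhds 1) := by
    simpa using (tendsto_const_div_atTop_nhds_zero_nat (k : ℝ)).const_add 1
  have h_initial := tendsto_const_div_atTop_nhds_zero_nat (Nat.count p k : ℝ)
  have h_lim : Tendsto (fun n : ℕ => (Nat.count p (n + k) : ℝ) / (n + k : ℕ) * (1 + (k : ℝ) / n) -
      (Nat.count p k : ℝ) / n) atTop (nhds d) := by
    simpa only [mul_one, sub_zero] using (h_tail.mul h_ratio).sub h_initial
  refine h_lim.congr' ?_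
  filter_upwards [eventually_ne_atTop 0] with n hn
  rw [add_comm n k, Nat.count_add]
  push_cast
  field_simp
  ring

theorem digitCount_eq_count (r b n : ℕ) (α : ℝ) :
    digitCount r b n α = Nat.count (fun j => digit r α (j + 1) = b) n := by
  rw [digitCount, Nat.count_eq_card_filter_range, card_filter, card_filter, range_eq_Ico,
    sum_Ico_add' (fun j => if digit r α j = b then 1 else 0), zero_add, Ico_add_one_right_eq_Icc]

theorem digit_pow_mul (r k j : ℕ) (α : ℝ) :
    digit r ((r : ℝ) ^ k * α) j = digit r α (k + j) := by
  rw [digit, digit, ← mul_assoc, ← pow_add, add_comm j k]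

theorem SimplyNormal.pow_mul {r : ℕ} {α : ℝ} (h : SimplyNormal r α) (k : ℕ) :
    SimplyNormal r ((r : ℝ) ^ k * α) := by
  intro b hb
  simp only [SimplyNormal, digitCount_eq_count] at h
  simpa only [digitCount_eq_count, digit_pow_mul, add_assoc] using
    tendsto_count_add_div (h b hb) k

/-- If `r ^ m * α` is simply normal in base `r ^ n` for all `n ≥ 1` and all `m < n`,
then `α` is normal in base `r`. -/
theorem normal_of_simplyNormal_lt (r : ℕ) (hr : 2 ≤ r) (α : ℝ)
    (h : ∀ n : ℕ, 1 ≤ n → ∀ m : ℕ, m < n → SimplyNormal (r ^ n) ((r : ℝ) ^ m * α)) :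
    NormalBase r α := by
  intro n hn m
  have h_pow : ((r ^ n : ℕ) : ℝ) ^ (m / n) * ((r : ℝ) ^ (m % n) * α) = (r : ℝ) ^ m * α := by
    rw [Nat.cast_pow, ← mul_assoc, ← pow_mul, ← pow_add, Nat.div_add_mod]
  rw [← h_pow]
  exact (h n hn (m % n) (Nat.mod_lt m hn)).pow_mul (m / n)
end

section
/- Let r ≥ 2 be an integer and b ∈ {0,…,r−1} a digit. There exists a positive constant D such that for every real ε > 0 and every positive integer n, the Lebesgue measure of the set M_b(n,ε) = {α ∈ [0,1) : |p_{b,n,α,r}/n − 1/r| ≥ ε} is at most D/(ε^4 · n^2). -/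
open MeasureTheory Filter Finset

/-!
The map `x ↦ (x + d) / r` sends `[0, 1)` onto its `d`-th subinterval of length `1 / r` and prepends
the digit `d`, so the integral over `[0, 1)` is the average over `d` of the integrals along these
inverse branches. Expanding `(w d + digitSum r w n x) ^ k` by the binomial theorem then gives a
recursion in `n` for the moments of a digit sum. If the weight `w` has mean zero, it solves to
`n * μ₄ + 3 * n * (n - 1) * μ₂ ^ 2` for the fourth moment, where `μₖ` is the `k`-th moment of `w`.
This is at most `3 * n ^ 2` when `|w| ≤ 1`, and Markov's inequality for the fourth power concludes.
-/

lemma measure_le_abs_le_integral_pow_div {X : Type*} [MeasurableSpace X] {μ : Measure X}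
    {f : X → ℝ} {k : ℕ} (hk : Even k) (hf : Integrable (fun x => f x ^ k) μ) {c : ℝ}
    (hc : 0 < c) :
    μ {x | c ≤ |f x|} ≤ ENNReal.ofReal ((∫ x, f x ^ k ∂μ) / c ^ k) := by
  have hck : 0 < c ^ k := pow_pos hc k
  calc μ {x | c ≤ |f x|}
      ≤ μ {x | ENNReal.ofReal (c ^ k) ≤ ENNReal.ofReal (f x ^ k)} := by
        refine measure_mono fun x (hx : c ≤ |f x|) => ENNReal.ofReal_le_ofReal ?_
        exact hk.pow_abs (f x) ▸ pow_le_pow_left₀ hc.le hx k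
    _ ≤ (∫⁻ x, ENNReal.ofReal (f x ^ k) ∂μ) / ENNReal.ofReal (c ^ k) :=
        meas_ge_le_lintegral_div hf.aemeasurable.ennreal_ofReal
          (ENNReal.ofReal_pos.2 hck).ne' ENNReal.ofReal_ne_top
    _ = ENNReal.ofReal ((∫ x, f x ^ k ∂μ) / c ^ k) := by
        rw [ENNReal.ofReal_div_of_pos hck,
          ofReal_integral_eq_lintegral_ofReal hf (ae_of_all _ fun x => hk.pow_nonneg (f x))]

lemma integral_Ico_zero_one_eq_sum_integral_div {E : Type*} [NormedAddCommGroup E]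
    [NormedSpace ℝ E] {r : ℕ} (hr : r ≠ 0) {f : ℝ → E} (hf : IntegrableOn f (Set.Ico 0 1)) :
    ∫ x in Set.Ico (0 : ℝ) 1, f x =
      (r : ℝ)⁻¹ • ∑ d ∈ range r, ∫ x in Set.Ico (0 : ℝ) 1, f ((x + d) / r) := by
  have hr_pos : (0 : ℝ) < r := by positivity
  have hf01 : IntervalIntegrable f volume 0 1 :=
    (intervalIntegrable_iff_integrableOn_Ico_of_le zero_le_one).2 hf
  have hf_branch (d : ℕ) (hd : d < r) :
      IntervalIntegrable f volume (d / r) ((d + 1 : ℕ) / r) := by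
    have hd' : ((d + 1 : ℕ) : ℝ) / r ≤ 1 := (div_le_one hr_pos).2 (by exact_mod_cast hd)
    refine hf01.mono_set ?_
    rw [Set.uIcc_of_le (by gcongr; simp), Set.uIcc_of_le zero_le_one]
    exact Set.Icc_subset_Icc (by positivity) hd'
  have h_branch (d : ℕ) : ∫ x in (d / r : ℝ)..((d + 1 : ℕ) / r), f x =
      (r : ℝ)⁻¹ • ∫ x in (0 : ℝ)..1, f ((x + d) / r) := by
    simp_rw [add_div]
    rw [intervalIntegral.inv_smul_integral_comp_div_add]
    congr 1 <;> push_cast <;> ring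
  simp_rw [integral_Ico_eq_integral_Ioc, ← intervalIntegral.integral_of_le zero_le_one,
    smul_sum, ← h_branch]
  rw [intervalIntegral.sum_integral_adjacent_intervals (a := fun d : ℕ => (d / r : ℝ)) hf_branch]
  simp [hr]

section Digits

variable {r : ℕ}

lemma measurable_digit (r j : ℕ) : Measurable fun α => digit r α j :=
  (Measurable.of_discrete (f := fun z : ℤ => z % r)).comp
    (Int.measurable_floor.comp (measurable_const_mul _))

lemma exists_digit_eq_natCast (hr : r ≠ 0) (α : ℝ) (j : ℕ) : ∃ d < r, digit r α j = d := by
  have hr' : (0 : ℤ) < r := by positivity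
  obtain ⟨d, hd⟩ := Int.eq_ofNat_of_zero_le (Int.emod_nonneg ⌊(r : ℝ) ^ j * α⌋ hr'.ne')
  refine ⟨d, ?_, hd⟩
  have hlt := Int.emod_lt_of_pos ⌊(r : ℝ) ^ j * α⌋ hr'
  exact_mod_cast hd ▸ hlt

lemma digit_div_succ (hr : r ≠ 0) (α : ℝ) (j : ℕ) : digit r (α / r) (j + 1) = digit r α j := by
  have hr' : (r : ℝ) ≠ 0 := by exact_mod_cast hr
  rw [digit, digit, pow_succ, mul_assoc, mul_div_cancel₀ α hr']

lemma digit_add_natCast_succ (r : ℕ) (α : ℝ) (d j : ℕ) :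
    digit r (α + d) (j + 1) = digit r α (j + 1) := by
  have h_shift : (r : ℝ) ^ (j + 1) * (α + d) =
      (r : ℝ) ^ (j + 1) * α + ((r * (r ^ j * d) : ℤ) : ℝ) := by
    push_cast
    ring
  rw [digit, digit, h_shift, Int.floor_add_intCast, Int.add_mul_emod_self_left]

lemma digit_add_natCast_zero {α : ℝ} (hα : α ∈ Set.Ico 0 1) {d : ℕ} (hd : d < r) :
    digit r (α + d) 0 = d := by
  rw [digit, pow_zero, one_mul, Int.floor_add_natCast, Int.floor_eq_zero_iff.2 hα, zero_add]
  exact Int.emod_eq_of_lt (by positivity) (by exact_mod_cast hd)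

end Digits

section DigitSum

variable {r : ℕ} {w : ℤ → ℝ}

/-- The sum of the weights `w` of the first `n` base-`r` digits of `α` after the radix point. -/
noncomputable def digitSum (r : ℕ) (w : ℤ → ℝ) (n : ℕ) (α : ℝ) : ℝ :=
  ∑ j ∈ range n, w (digit r α (j + 1))

/-- The `k`-th moment of the weight `w` of a uniformly distributed base-`r` digit. -/
noncomputable def digitMoment (r : ℕ) (w : ℤ → ℝ) (k : ℕ) : ℝ :=
  (r : ℝ)⁻¹ * ∑ d ∈ range r, w d ^ k

lemma digitMoment_zero (hr : r ≠ 0) (w : ℤ → ℝ) : digitMoment r w 0 = 1 := by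
  simp [digitMoment, hr]

lemma abs_digitMoment_le_one (hw : ∀ d < r, |w d| ≤ 1) (k : ℕ) : |digitMoment r w k| ≤ 1 := by
  have h_sum : |∑ d ∈ range r, w d ^ k| ≤ r := by
    calc |∑ d ∈ range r, w d ^ k| ≤ ∑ d ∈ range r, |w d ^ k| := abs_sum_le_sum_abs _ _
      _ ≤ ∑ _d ∈ range r, (1 : ℝ) := by
          gcongr with d hd
          rw [abs_pow]
          exact pow_le_one₀ (abs_nonneg _) (hw d (mem_range.1 hd))
      _ = r := by simp
  rw [digitMoment, abs_mul, abs_of_nonneg (by positivity), ← div_eq_inv_mul]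
  exact div_le_one_of_le₀ h_sum r.cast_nonneg

lemma measurable_digitSum (r : ℕ) (w : ℤ → ℝ) (n : ℕ) : Measurable (digitSum r w n) :=
  Finset.measurable_fun_sum _ fun j _ => Measurable.of_discrete.comp (measurable_digit r (j + 1))

lemma abs_digitSum_le (hr : r ≠ 0) (w : ℤ → ℝ) (n : ℕ) (α : ℝ) :
    |digitSum r w n α| ≤ n * ∑ d ∈ range r, |w d| := by
  calc |digitSum r w n α| ≤ ∑ j ∈ range n, |w (digit r α (j + 1))| := abs_sum_le_sum_abs _ _
    _ ≤ ∑ _j ∈ range n, ∑ d ∈ range r, |w d| := by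
        gcongr with j
        obtain ⟨d, hd, hd_eq⟩ := exists_digit_eq_natCast hr α (j + 1)
        rw [hd_eq]
        exact single_le_sum (f := fun d : ℕ => |w d|) (fun _ _ => abs_nonneg _)
          (mem_range.2 hd)
    _ = n * ∑ d ∈ range r, |w d| := by simp

lemma integrable_digitSum_pow (hr : r ≠ 0) (w : ℤ → ℝ) (n k : ℕ) (μ : Measure ℝ)
    [IsFiniteMeasure μ] : Integrable (fun α => digitSum r w n α ^ k) μ := by
  refine .of_bound ((measurable_digitSum r w n).pow_const k).aestronglyMeasurable
    ((n * ∑ d ∈ range r, |w d|) ^ k) (ae_of_all _ fun α => ?_)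
  rw [norm_pow, Real.norm_eq_abs]
  exact pow_le_pow_left₀ (abs_nonneg _) (abs_digitSum_le hr w n α) k

lemma digitSum_succ_add_natCast_div (w : ℤ → ℝ) (n : ℕ) {α : ℝ} (hα : α ∈ Set.Ico 0 1) {d : ℕ}
    (hd : d < r) : digitSum r w (n + 1) ((α + d) / r) = w d + digitSum r w n α := by
  simp_rw [digitSum, digit_div_succ (Nat.ne_zero_of_lt hd)]
  rw [sum_range_succ', digit_add_natCast_zero hα hd, add_comm]
  simp_rw [digit_add_natCast_succ]

lemma integral_add_digitSum_pow (hr : r ≠ 0) (w : ℤ → ℝ) (n k : ℕ) (c : ℝ) (μ : Measure ℝ)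
    [IsFiniteMeasure μ] :
    ∫ α, (c + digitSum r w n α) ^ k ∂μ =
      ∑ i ∈ range (k + 1), c ^ i * (∫ α, digitSum r w n α ^ (k - i) ∂μ) * k.choose i := by
  simp_rw [add_pow]
  rw [integral_finsetSum _ fun i _ =>
    ((integrable_digitSum_pow hr w n (k - i) μ).const_mul _).mul_const _]
  simp_rw [integral_mul_const, integral_const_mul]

lemma integral_digitSum_succ_pow (hr : r ≠ 0) (w : ℤ → ℝ) (n k : ℕ) :
    ∫ α in Set.Ico (0 : ℝ) 1, digitSum r w (n + 1) α ^ k =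
      ∑ i ∈ range (k + 1), digitMoment r w i *
        (∫ α in Set.Ico (0 : ℝ) 1, digitSum r w n α ^ (k - i)) * k.choose i := by
  have h_branch (d : ℕ) (hd : d ∈ range r) :
      ∫ α in Set.Ico (0 : ℝ) 1, digitSum r w (n + 1) ((α + d) / r) ^ k =
        ∫ α in Set.Ico (0 : ℝ) 1, (w d + digitSum r w n α) ^ k :=
    setIntegral_congr_fun measurableSet_Ico fun α hα => by
      simp only [digitSum_succ_add_natCast_div w n hα (mem_range.1 hd)]
  rw [integral_Ico_zero_one_eq_sum_integral_div hr (integrable_digitSum_pow hr w (n + 1) k _),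
    sum_congr rfl h_branch]
  simp_rw [integral_add_digitSum_pow hr]
  rw [sum_comm, smul_eq_mul, mul_sum]
  simp_rw [digitMoment, ← sum_mul, mul_assoc]

lemma integral_digitSum (hr : r ≠ 0) (h_mean : digitMoment r w 1 = 0) (n : ℕ) :
    ∫ α in Set.Ico (0 : ℝ) 1, digitSum r w n α = 0 := by
  induction n with
  | zero => simp [digitSum]
  | succ n ih =>
    have h_rec := integral_digitSum_succ_pow hr w n 1
    simpa [sum_range_succ, digitMoment_zero hr, h_mean, ih] using h_rec

lemma integral_digitSum_sq (hr : r ≠ 0) (h_mean : digitMoment r w 1 = 0) (n : ℕ) :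
    ∫ α in Set.Ico (0 : ℝ) 1, digitSum r w n α ^ 2 = n * digitMoment r w 2 := by
  induction n with
  | zero => simp [digitSum]
  | succ n ih =>
    have h_step : ∫ α in Set.Ico (0 : ℝ) 1, digitSum r w (n + 1) α ^ 2 =
        (∫ α in Set.Ico (0 : ℝ) 1, digitSum r w n α ^ 2) + digitMoment r w 2 := by
      simp [integral_digitSum_succ_pow hr, sum_range_succ, digitMoment_zero hr, h_mean]
    rw [h_step, ih]
    push_cast
    ring

lemma integral_digitSum_pow_four (hr : r ≠ 0) (h_mean : digitMoment r w 1 = 0) (n : ℕ) :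
    ∫ α in Set.Ico (0 : ℝ) 1, digitSum r w n α ^ 4 =
      n * digitMoment r w 4 + 3 * n * (n - 1) * digitMoment r w 2 ^ 2 := by
  induction n with
  | zero => simp [digitSum]
  | succ n ih =>
    have h_step : ∫ α in Set.Ico (0 : ℝ) 1, digitSum r w (n + 1) α ^ 4 =
        (∫ α in Set.Ico (0 : ℝ) 1, digitSum r w n α ^ 4) +
          digitMoment r w 2 * (n * digitMoment r w 2) * 6 + digitMoment r w 4 := by
      simp [integral_digitSum_succ_pow hr, sum_range_succ, digitMoment_zero hr, h_mean,
        integral_digitSum hr h_mean, integral_digitSum_sq hr h_mean, Nat.choose]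
    rw [h_step, ih]
    push_cast
    ring

lemma integral_digitSum_pow_four_le (hr : r ≠ 0) (h_mean : digitMoment r w 1 = 0)
    (hw : ∀ d < r, |w d| ≤ 1) (n : ℕ) :
    ∫ α in Set.Ico (0 : ℝ) 1, digitSum r w n α ^ 4 ≤ 3 * n ^ 2 := by
  have h_four : digitMoment r w 4 ≤ 1 := (abs_le.1 (abs_digitMoment_le_one hw 4)).2
  have h_two : digitMoment r w 2 ^ 2 ≤ 1 := (sq_le_one_iff_abs_le_one _).2
    (abs_digitMoment_le_one hw 2)
  have h_pairs : (0 : ℝ) ≤ 3 * n * (n - 1) := by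
    rcases n.eq_zero_or_pos with rfl | hn
    · simp
    · have : (1 : ℝ) ≤ n := by exact_mod_cast hn
      nlinarith
  calc ∫ α in Set.Ico (0 : ℝ) 1, digitSum r w n α ^ 4
      = n * digitMoment r w 4 + 3 * n * (n - 1) * digitMoment r w 2 ^ 2 :=
        integral_digitSum_pow_four hr h_mean n
    _ ≤ n * 1 + 3 * n * (n - 1) * 1 := by gcongr
    _ ≤ 3 * n ^ 2 := by linarith [n.cast_nonneg (α := ℝ)]

lemma volume_le_abs_digitSum_le (hr : r ≠ 0) (h_mean : digitMoment r w 1 = 0)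
    (hw : ∀ d < r, |w d| ≤ 1) (n : ℕ) {c : ℝ} (hc : 0 < c) :
    volume {α : ℝ | α ∈ Set.Ico (0 : ℝ) 1 ∧ c ≤ |digitSum r w n α|} ≤
      ENNReal.ofReal (3 * n ^ 2 / c ^ 4) := by
  have h_markov := measure_le_abs_le_integral_pow_div (by decide : Even 4)
    (integrable_digitSum_pow hr w n 4 (volume.restrict (Set.Ico 0 1))) hc
  rw [Measure.restrict_apply' measurableSet_Ico, Set.inter_comm] at h_markov
  refine h_markov.trans (ENNReal.ofReal_le_ofReal ?_)
  gcongr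
  exact integral_digitSum_pow_four_le hr h_mean hw n

end DigitSum

/-- The weight that centers the indicator of the digit `b`: summing it over the first `n` digits
gives the deviation of the number of occurrences of `b` from its mean `n / r`. -/
noncomputable def centeredIndicator (r b : ℕ) (d : ℤ) : ℝ :=
  (if d = b then 1 else 0) - 1 / r

lemma digitMoment_centeredIndicator_one {r b : ℕ} (hb : b < r) :
    digitMoment r (centeredIndicator r b) 1 = 0 := by
  have hr : (r : ℝ) ≠ 0 := by exact_mod_cast Nat.ne_zero_of_lt hb
  simp [digitMoment, centeredIndicator, sum_sub_distrib, hb, hr]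

lemma abs_centeredIndicator_le_one (r b : ℕ) (d : ℤ) : |centeredIndicator r b d| ≤ 1 := by
  have h_nonneg : (0 : ℝ) ≤ 1 / r := by positivity
  have h_le_one : (1 : ℝ) / r ≤ 1 := by simpa using Nat.cast_inv_le_one r
  rw [centeredIndicator, abs_le]
  split_ifs <;> constructor <;> linarith

lemma digitSum_centeredIndicator (r b n : ℕ) (α : ℝ) :
    digitSum r (centeredIndicator r b) n α = digitCount r b n α - n / r := by
  have h_count : (digitCount r b n α : ℝ) =
      ∑ j ∈ range n, if digit r α (j + 1) = b then 1 else 0 := by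
    rw [digitCount, natCast_card_filter, ← Ico_add_one_right_eq_Icc, sum_Ico_eq_sum_range]
    simp [add_comm]
  simp [digitSum, centeredIndicator, sum_sub_distrib, h_count, div_eq_mul_inv]

lemma abs_digitSum_centeredIndicator (r b : ℕ) {n : ℕ} (hn : n ≠ 0) (α : ℝ) :
    |digitSum r (centeredIndicator r b) n α| =
      |(digitCount r b n α : ℝ) / n - 1 / r| * n := by
  calc |digitSum r (centeredIndicator r b) n α|
      = |((digitCount r b n α : ℝ) / n - 1 / r) * n| := by
        rw [digitSum_centeredIndicator]
        congr 1
        field_simp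
    _ = |(digitCount r b n α : ℝ) / n - 1 / r| * n := by rw [abs_mul, Nat.abs_cast]

/-- There is a constant `D > 0` such that the measure of the set of numbers in
`Set.Ico 0 1` whose digit frequency deviates from `1 / r` by at least `ε` after `n`
digits is at most `D / (ε ^ 4 * n ^ 2)`. -/
theorem measure_deviation_bound (r : ℕ) (hr : 2 ≤ r) (b : ℕ) (hb : b < r) :
    ∃ D : ℝ, 0 < D ∧ ∀ ε : ℝ, 0 < ε → ∀ n : ℕ, 1 ≤ n →
      volume {α : ℝ | α ∈ Set.Ico (0 : ℝ) 1 ∧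
          ε ≤ |(digitCount r b n α : ℝ) / n - 1 / r|} ≤
        ENNReal.ofReal (D / (ε ^ 4 * n ^ 2)) := by
  refine ⟨3, by norm_num, fun ε hε n hn => ?_⟩
  have hn_pos : (0 : ℝ) < n := by exact_mod_cast hn
  have h_bound := volume_le_abs_digitSum_le (Nat.ne_zero_of_lt hb)
    (digitMoment_centeredIndicator_one hb) (fun d _ => abs_centeredIndicator_le_one r b d) n
    (mul_pos hε hn_pos)
  have h_const : 3 * (n : ℝ) ^ 2 / (ε * n) ^ 4 = 3 / (ε ^ 4 * n ^ 2) := by field_simp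
  simpa only [abs_digitSum_centeredIndicator r b (Nat.ne_zero_of_lt hn), h_const,
    mul_le_mul_iff_left₀ hn_pos] using h_bound
end

section
/- For every integer r ≥ 2, the set of all real numbers α ≥ 0 (not restricted to [0,1)) that are not simply normal in base r is a Lebesgue null set. -/
open MeasureTheory Filter Finset

/-!
The digits of `α` in base `r` are the values of the first digit along the orbit of `α` under
multiplication by `r` on `ℝ / ℤ`, which preserves Haar measure. Translation by `1 / r` is invisible
to multiplication by `r`, while it cycles the first digit; since it also preserves Haar measure, the
first digit is uniformly distributed and independent of `r • x`, hence of every later digit. The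
digits are therefore pairwise independent and identically distributed, and Etemadi's strong law of
large numbers applies, as it asks for no more than pairwise independence.
-/

open ProbabilityTheory

section Frequency

variable {Ω Ω' E F : Type*} [MeasurableSpace Ω] [MeasurableSpace Ω'] [MeasurableSpace E]
  [MeasurableSpace F] {μ : Measure Ω}

theorem ae_tendsto_card_filter_mem_div [IsFiniteMeasure μ] {X : ℕ → Ω → E} {s : Set E}
    [DecidablePred (· ∈ s)] (hs : MeasurableSet s) (hX : Pairwise fun i j => X i ⟂ᵢ[μ] X j)
    (hident : ∀ i, IdentDistrib (X i) (X 0) μ μ) :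
    ∀ᵐ ω ∂μ, Tendsto (fun n : ℕ => (#{i ∈ range n | X i ω ∈ s} : ℝ) / n) atTop
      (nhds (μ.real (X 0 ⁻¹' s))) := by
  let f : E → ℝ := s.indicator fun _ => 1
  have hf : Measurable f := measurable_const.indicator hs
  have hX₀ : NullMeasurableSet (X 0 ⁻¹' s) μ := (hident 0).aemeasurable_fst.nullMeasurable hs
  have hcomp : f ∘ X 0 = (X 0 ⁻¹' s).indicator fun _ => 1 := rfl
  have hint : Integrable (f ∘ X 0) μ := by
    rw [hcomp]
    exact (integrable_const 1).indicator₀ hX₀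
  have hmean : ∫ ω, (f ∘ X 0) ω ∂μ = μ.real (X 0 ⁻¹' s) := by
    rw [hcomp, integral_indicator₀ hX₀, setIntegral_const, smul_eq_mul, mul_one]
  have hlln := strong_law_ae_real (fun i => f ∘ X i) hint
    (fun i j hij => (hX hij).comp hf hf) fun i => (hident i).comp hf
  filter_upwards [hlln] with ω hω
  rw [hmean] at hω
  simpa [f, Set.indicator_apply] using hω

lemma indepFun_comp_measurePreserving_s11 {ν : Measure Ω'} {φ : Ω → Ω'} {f : Ω' → E} {g : Ω' → F}
    (hfg : f ⟂ᵢ[ν] g) (hf : Measurable f) (hg : Measurable g) (hφ : MeasurePreserving φ μ ν) :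
    (f ∘ φ) ⟂ᵢ[μ] (g ∘ φ) := by
  rw [indepFun_iff_measure_inter_preimage_eq_mul] at hfg ⊢
  intro s t hs ht
  simp only [Set.preimage_comp, ← Set.preimage_inter]
  rw [hφ.measure_preimage ((hf hs).inter (hg ht)).nullMeasurableSet,
    hφ.measure_preimage (hf hs).nullMeasurableSet, hφ.measure_preimage (hg ht).nullMeasurableSet,
    hfg s t hs ht]

lemma pairwise_indepFun_comp_iterate {T : Ω → Ω} {d : Ω → E} (hT : MeasurePreserving T μ μ)
    (hd : Measurable d) (hindep : d ⟂ᵢ[μ] T) :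
    Pairwise fun i j => (d ∘ T^[i]) ⟂ᵢ[μ] (d ∘ T^[j]) := by
  have hd_iter : ∀ k, Measurable (d ∘ T^[k]) := fun k => hd.comp (hT.iterate k).measurable
  have hlt : ∀ i j, i < j → (d ∘ T^[i]) ⟂ᵢ[μ] (d ∘ T^[j]) := by
    intro i j hij
    obtain ⟨k, rfl⟩ := Nat.exists_eq_add_of_lt hij
    have hfuture : d ⟂ᵢ[μ] (d ∘ T^[k + 1]) := hindep.comp measurable_id (hd_iter k)
    have hsplit : d ∘ T^[i + k + 1] = (d ∘ T^[k + 1]) ∘ T^[i] := by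
      rw [Function.comp_assoc, ← Function.iterate_add, add_assoc, add_comm i]
    rw [hsplit]
    exact indepFun_comp_measurePreserving_s11 hfuture hd (hd_iter (k + 1)) (hT.iterate i)
  intro i j hij
  rcases hij.lt_or_gt with h | h
  · exact hlt i j h
  · exact (hlt j i h).symm

lemma identDistrib_comp_measurePreserving {ν : Measure Ω'} {φ : Ω → Ω'} {d : Ω' → E}
    (hφ : MeasurePreserving φ μ ν) (hd : Measurable d) : IdentDistrib (d ∘ φ) d μ ν where
  aemeasurable_fst := (hd.comp hφ.measurable).aemeasurable
  aemeasurable_snd := hd.aemeasurable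
  map_eq := by rw [← Measure.map_map hd hφ.measurable, hφ.map_eq]

end Frequency

section Equivariant

variable {Ω E G : Type*} [MeasurableSpace Ω] [MeasurableSpace E] {μ : Measure Ω}
  [AddGroup G] [Finite G] [MeasurableSpace G] [MeasurableSingletonClass G]
  {σ : G → Ω → Ω} {d : Ω → G}

lemma measure_preimage_singleton_inter_of_equivariant (hσ : ∀ g, MeasurePreserving (σ g) μ μ)
    (hd : Measurable d) (hequiv : ∀ g ω, d (σ g ω) = g + d ω) {A : Set Ω} (hA : MeasurableSet A)
    (hinv : ∀ g, σ g ⁻¹' A = A) (g : G) :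
    μ (d ⁻¹' {g} ∩ A) = (Nat.card G : ENNReal)⁻¹ * μ A := by
  have hfiber : ∀ k, MeasurableSet (d ⁻¹' {k}) := fun k => hd (measurableSet_singleton k)
  have hconst : ∀ k, μ (d ⁻¹' {k} ∩ A) = μ (d ⁻¹' {0} ∩ A) := by
    intro k
    have hshift : σ k ⁻¹' (d ⁻¹' {k}) = d ⁻¹' {0} := by
      ext ω
      simp [hequiv]
    rw [← (hσ k).measure_preimage ((hfiber k).inter hA).nullMeasurableSet, Set.preimage_inter,
      hinv, hshift]
  have := Fintype.ofFinite G
  have hsum : Nat.card G * μ (d ⁻¹' {g} ∩ A) = μ A :=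
    calc Nat.card G * μ (d ⁻¹' {g} ∩ A) = ∑ k : G, μ (d ⁻¹' {k} ∩ A) := by
          simp [hconst]
      _ = ∑ k : G, μ.restrict A (d ⁻¹' {k}) := by
          simp only [Measure.restrict_apply (hfiber _)]
      _ = μ A := by
          rw [sum_measure_preimage_singleton _ fun k _ => hfiber k]
          simp
  rw [← hsum, ← mul_assoc, ENNReal.inv_mul_cancel (by simp) (by simp), one_mul]

variable [IsProbabilityMeasure μ]

lemma measure_preimage_singleton_of_equivariant (hσ : ∀ g, MeasurePreserving (σ g) μ μ)
    (hd : Measurable d) (hequiv : ∀ g ω, d (σ g ω) = g + d ω) (g : G) :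
    μ (d ⁻¹' {g}) = (Nat.card G : ENNReal)⁻¹ := by
  simpa using measure_preimage_singleton_inter_of_equivariant hσ hd hequiv .univ
    (fun _ => Set.preimage_univ) g

lemma indepFun_of_equivariant_of_invariant (hσ : ∀ g, MeasurePreserving (σ g) μ μ)
    (hd : Measurable d) (hequiv : ∀ g ω, d (σ g ω) = g + d ω) {T : Ω → E} (hT : Measurable T)
    (hinv : ∀ g ω, T (σ g ω) = T ω) : d ⟂ᵢ[μ] T := by
  rw [indepFun_iff_measure_inter_preimage_eq_mul]
  intro s t hs ht
  have hmap : (μ.restrict (T ⁻¹' t)).map d = μ (T ⁻¹' t) • μ.map d := by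
    refine Measure.ext_of_singleton fun g => ?_
    have hg : MeasurableSet {g} := measurableSet_singleton g
    have hinv_preimage : ∀ k, σ k ⁻¹' (T ⁻¹' t) = T ⁻¹' t := by
      intro k
      ext ω
      simp [hinv]
    rw [Measure.smul_apply, Measure.map_apply hd hg, Measure.map_apply hd hg,
      Measure.restrict_apply (hd hg),
      measure_preimage_singleton_inter_of_equivariant hσ hd hequiv (hT ht) hinv_preimage,
      measure_preimage_singleton_of_equivariant hσ hd hequiv, smul_eq_mul, mul_comm]
  have happly := congrArg (· s) hmap
  simpa [Measure.map_apply hd hs, Measure.restrict_apply (hd hs), mul_comm] using happly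

theorem ae_tendsto_card_filter_iterate_eq_div_of_equivariant [DecidableEq G]
    (hσ : ∀ g, MeasurePreserving (σ g) μ μ) (hd : Measurable d)
    (hequiv : ∀ g ω, d (σ g ω) = g + d ω) {T : Ω → Ω} (hT : MeasurePreserving T μ μ)
    (hinv : ∀ g ω, T (σ g ω) = T ω) (g : G) :
    ∀ᵐ ω ∂μ, Tendsto (fun n : ℕ => (#{i ∈ range n | d (T^[i] ω) = g} : ℝ) / n) atTop
      (nhds (1 / Nat.card G)) := by
  have hindep : d ⟂ᵢ[μ] T :=
    indepFun_of_equivariant_of_invariant hσ hd hequiv hT.measurable hinv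
  have hfreq := ae_tendsto_card_filter_mem_div (measurableSet_singleton g)
    (pairwise_indepFun_comp_iterate hT hd hindep)
    fun i => identDistrib_comp_measurePreserving (hT.iterate i) hd
  simpa [measureReal_def, measure_preimage_singleton_of_equivariant hσ hd hequiv] using hfreq

end Equivariant

section Circle

lemma quasiMeasurePreserving_addCircle_mk (T : ℝ) [hT : Fact (0 < T)] :
    Measure.QuasiMeasurePreserving ((↑) : ℝ → AddCircle T) := by
  refine ⟨AddCircle.measurable_mk', ?_⟩
  rw [← (AddCircle.measurePreserving_mk T 0).map_eq]
  exact (isAddFundamentalDomain_Ioc' hT.out 0).absolutelyContinuous_map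

lemma periodic_intCast_floor_natCast_mul (r : ℕ) :
    Function.Periodic (fun x : ℝ => (⌊(r : ℝ) * x⌋ : ZMod r)) 1 := by
  intro x
  simp [mul_add]

/-- The first base-`r` digit of a point of `ℝ / ℤ`, encoded as a residue modulo `r` so that
translation by `k / r` adds `k` to it. The later digits are its values along the orbit under
multiplication by `r`. -/
noncomputable def firstDigit (r : ℕ) : UnitAddCircle → ZMod r :=
  (periodic_intCast_floor_natCast_mul r).lift

lemma firstDigit_coe (r : ℕ) (x : ℝ) : firstDigit r x = (⌊(r : ℝ) * x⌋ : ZMod r) := rfl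

lemma measurable_firstDigit (r : ℕ) : Measurable (firstDigit r) := by
  refine measurable_from_quotient.2 ?_
  change Measurable fun x : ℝ => (⌊(r : ℝ) * x⌋ : ZMod r)
  fun_prop

lemma digit_succ_eq_iff {r b : ℕ} (hb : b < r) (α : ℝ) (i : ℕ) :
    digit r α (i + 1) = b ↔ firstDigit r ((r • ·)^[i] (α : UnitAddCircle)) = b := by
  have hmod : (b : ℤ) % r = b := Int.emod_eq_of_lt (by positivity) (by exact_mod_cast hb)
  have hfirst : firstDigit r ((r • ·)^[i] (α : UnitAddCircle)) =
      (⌊(r : ℝ) ^ (i + 1) * α⌋ : ZMod r) := by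
    simp only [smul_iterate, ← AddCircle.coe_nsmul, firstDigit_coe]
    rw [nsmul_eq_mul, Nat.cast_pow, ← mul_assoc, ← pow_succ']
  rw [hfirst, digit, ← Int.cast_natCast (R := ZMod r) b, ZMod.intCast_eq_intCast_iff, Int.ModEq,
    hmod]

lemma digitCount_eq_card_filter_range (r b n : ℕ) (α : ℝ) :
    digitCount r b n α = #{i ∈ range n | digit r α (i + 1) = b} := by
  have hIcc : Icc 1 n = (range n).map (addRightEmbedding 1) := by
    rw [range_eq_Ico, Finset.map_add_right_Ico, zero_add, Ico_add_one_right_eq_Icc]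
  simp [digitCount, hIcc, filter_map]

variable {r : ℕ} [NeZero r]

lemma firstDigit_div_add (k : ZMod r) (x : UnitAddCircle) :
    firstDigit r ((k.val / r : ℝ) + x) = k + firstDigit r x := by
  induction x using QuotientAddGroup.induction_on with | _ x
  rw [← AddCircle.coe_add, firstDigit_coe, firstDigit_coe, mul_add,
    mul_div_cancel₀ _ (NeZero.ne (r : ℝ)), Int.floor_natCast_add]
  simp

lemma nsmul_coe_natCast_div (n : ℕ) : r • ((n / r : ℝ) : UnitAddCircle) = 0 := by
  rw [← AddCircle.coe_nsmul, nsmul_eq_mul, mul_div_cancel₀ _ (NeZero.ne (r : ℝ))]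
  exact (AddCircle.coe_eq_zero_iff 1).2 ⟨n, by simp⟩

theorem ae_tendsto_card_filter_firstDigit_eq_div (k : ZMod r) :
    ∀ᵐ x : UnitAddCircle,
      Tendsto (fun n : ℕ => (#{i ∈ range n | firstDigit r ((r • ·)^[i] x) = k} : ℝ) / n) atTop
        (nhds (1 / r)) := by
  have : IsProbabilityMeasure (volume : Measure UnitAddCircle) := ⟨UnitAddCircle.measure_univ⟩
  have hrotate (j : ZMod r) : MeasurePreserving (((j.val / r : ℝ) : UnitAddCircle) + ·) :=
    measurePreserving_add_left volume _
  have hmul : MeasurePreserving (r • · : UnitAddCircle → UnitAddCircle) := by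
    simpa using Measure.measurePreserving_zsmul volume (NeZero.ne (r : ℤ))
  have hmul_rotate (j : ZMod r) (x : UnitAddCircle) : r • ((j.val / r : ℝ) + x) = r • x := by
    rw [smul_add, nsmul_coe_natCast_div, zero_add]
  simpa using ae_tendsto_card_filter_iterate_eq_div_of_equivariant hrotate
    (measurable_firstDigit r) firstDigit_div_add hmul hmul_rotate k

end Circle

theorem almost_all_nonneg_simply_normal_general (r : ℕ) : ∀ᵐ α : ℝ, SimplyNormal r α := by
  rcases r.eq_zero_or_pos with rfl | hr
  · exact .of_forall fun α b hb => absurd hb b.not_lt_zero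
  have : NeZero r := .of_pos hr
  have hcircle := ae_all_iff.2 (ae_tendsto_card_filter_firstDigit_eq_div (r := r))
  filter_upwards [(quasiMeasurePreserving_addCircle_mk 1).ae hcircle] with α hα b hb
  simpa only [digitCount_eq_card_filter_range, digit_succ_eq_iff hb] using hα b

/-- The set of all nonnegative reals that are not simply normal in base `r` is null. -/
theorem almost_all_nonneg_simply_normal (r : ℕ) (hr : 2 ≤ r) :
    volume {α : ℝ | 0 ≤ α ∧ ¬ SimplyNormal r α} = 0 :=
  measure_mono_null (fun _ hα => hα.2) (ae_iff.1 (almost_all_nonneg_simply_normal_general r))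
end
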